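/- If f ∈ Homeo_+[0,1] satisfies conditions (1)–(3) — namely: (1) the linear order of connected components of [0,1] ∖ Fix(f) is dense and has no least or greatest element, (2) Fix(f) is totally disconnected, and (3) the positive components and the negative components each form a subset of this linear order that is dense in it and unbounded in both directions — then the conjugacy class of f is comeager in Homeo_+[0,1]. -/

import Mathlib

/-!
The proof isolates a property `Rich` such that any two rich homeomorphisms with nowhere dense fixed
point sets are conjugate (`Rich.conj`), and shows that a homeomorphism satisfying the hypotheses is
rich with nowhere dense fixed point set (`GenericCond.rich`, `GenericCond.dense`), as is every
homeomorphism in a residual set (`eventually_rich`). Richness says that points of both signs occur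
strictly between any two distinct components, and beyond any component, of the complement of the
fixed point set.

Conjugacy is obtained by one back-and-forth argument that treats the order of the components and the
dynamics inside them together. Replace `f` by `F = max f f⁻¹`, which satisfies `x ≤ F x`, and remember
the sign of each point as a colour; `f` can be recovered from `F` and the colour. A finite partial
isomorphism between two such systems `(F, c)` and `(H, d)` is a finite set of pairs `(a, b)` of the
same colour with `a < F ^ n a' ↔ b < H ^ n b'` for all pairs and all integers `n`. To add a new point
`a` there are two cases. If `a` lies in a component met by the domain, it is enclosed by consecutive
iterates of finitely many known points, and any `b` in the corresponding interval works
(`exists_cut_of_mem_component`). Otherwise every known orbit lies on one side of `a`, and richness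
provides `b` of the right colour in a new component (`exists_cut_of_notMem_component`). Carried out
over countable dense sets, this gives an isomorphism of dense sets that commutes with the dynamics
(`exists_dense_iso`), and it extends to `[0,1]` by suprema (`exists_orderIso_extend`).

For residuality, consider for `x < y` the set `Osc x y` of homeomorphisms that either have no fixed
point in `[x, y]` or whose displacement takes the signs `-, +, -, +` at four successive points of
`(x, y)`. It is open by compactness of `[x, y]`, and dense because near a fixed point in `[x, y]` one
may replace `h` by `max (h - δ) (min (h + δ) k)` for a rapidly oscillating homeomorphism `k`. Lying in
`Osc x y` for all `x < y` in a countable dense set that contains `0` and `1` implies richness.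
-/

open unitInterval

noncomputable section

/-- The group of orientation-preserving homeomorphisms of `[0,1]`:
increasing homeomorphisms of the unit interval. -/
def OPH : Type := {f : I ≃ₜ I // Monotone f}

/-- `Homeo₊[0,1]` with the supremum metric `d_sup(f,g) = sup_x |f x - g x|`,
obtained by inducing the metric from `C(I,I)` (whose distance is the sup-distance). -/
noncomputable instance : MetricSpace OPH :=
  MetricSpace.induced (fun f => (⟨(f.1 : I → I), f.1.continuous⟩ : C(I, I)))
    (fun f g h => Subtype.ext (Homeomorph.ext fun x => by
      simpa using ContinuousMap.congr_fun h x))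
    inferInstance

/-- The identity of `Homeo₊[0,1]`. -/
def OPH.id : OPH := ⟨Homeomorph.refl I, fun _ _ h => h⟩

/-- `f ↦ f̃` where `f̃ (x) = 1 - f (1 - x)`. -/
def OPH.tilde (f : OPH) : OPH :=
  ⟨symmHomeomorph.trans (f.1.trans symmHomeomorph), by
    intro x y hxy
    have h1 : σ y ≤ σ x := symm_le_symm.mpr hxy
    have h2 : f.1 (σ y) ≤ f.1 (σ x) := f.2 h1
    exact symm_le_symm.mpr h2⟩


/-- The set of connected components of `[0,1] ∖ Fix(f)` for `f ∈ Homeo₊[0,1]`. -/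
def Comps (f : OPH) : Set (Set I) :=
  {S | ∃ x : I, f.1 x ≠ x ∧ S = connectedComponentIn {y : I | f.1 y ≠ y} x}

/-- `S` lies entirely to the left of `T` in `[0,1]`: the strict order on the components of
`[0,1] ∖ Fix(f)` induced by their position in `[0,1]`. -/
def CompLT (S T : Set I) : Prop := ∀ x ∈ S, ∀ y ∈ T, x < y

/-- `S` is a positive interval of `f`: `f x > x` on `S`. -/
def PosComp (f : OPH) (S : Set I) : Prop := ∀ x ∈ S, x < f.1 x

/-- `S` is a negative interval of `f`: `f x < x` on `S`. -/
def NegComp (f : OPH) (S : Set I) : Prop := ∀ x ∈ S, f.1 x < x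

/-- Conditions (1)–(3) for `f ∈ Homeo₊[0,1]`:
(1) the linear order of components of `[0,1] ∖ Fix(f)` is dense without least or greatest
element; (2) `Fix(f)` is totally disconnected; (3) the positive components and the negative
components are each dense and unbounded in both directions in this linear order. -/
def GenericCond (f : OPH) : Prop :=
  (∀ S ∈ Comps f, ∀ T ∈ Comps f, CompLT S T → ∃ U ∈ Comps f, CompLT S U ∧ CompLT U T) ∧
  (∀ S ∈ Comps f, ∃ T ∈ Comps f, CompLT T S) ∧
  (∀ S ∈ Comps f, ∃ T ∈ Comps f, CompLT S T) ∧
  IsTotallyDisconnected {x : I | f.1 x = x} ∧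
  (∀ S ∈ Comps f, ∀ T ∈ Comps f, CompLT S T →
    ∃ U ∈ Comps f, PosComp f U ∧ CompLT S U ∧ CompLT U T) ∧
  (∀ S ∈ Comps f, ∃ T ∈ Comps f, PosComp f T ∧ CompLT T S) ∧
  (∀ S ∈ Comps f, ∃ T ∈ Comps f, PosComp f T ∧ CompLT S T) ∧
  (∀ S ∈ Comps f, ∀ T ∈ Comps f, CompLT S T →
    ∃ U ∈ Comps f, NegComp f U ∧ CompLT S U ∧ CompLT U T) ∧
  (∀ S ∈ Comps f, ∃ T ∈ Comps f, NegComp f T ∧ CompLT T S) ∧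
  (∀ S ∈ Comps f, ∃ T ∈ Comps f, NegComp f T ∧ CompLT S T)

/-! ### Integer iterates of an expanding order automorphism -/

lemma zpow_add_app (F : I ≃o I) (m n : ℤ) (x : I) : (F ^ (m + n)) x = (F ^ m) ((F ^ n) x) := by
  rw [zpow_add, RelIso.mul_apply]

lemma zpow_lt_iff (F : I ≃o I) (n m : ℤ) (x y : I) :
    (F ^ n) x < (F ^ m) y ↔ x < (F ^ (m - n)) y := by
  rw [show m = n + (m - n) by ring, zpow_add_app, OrderIso.lt_iff_lt, add_sub_cancel_left]

lemma zpow_app_lt_iff (F : I ≃o I) (n : ℤ) (x y : I) :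
    (F ^ n) x < y ↔ x < (F ^ (-n)) y := by
  have := zpow_lt_iff F n 0 x y
  simpa using this

lemma zpow_mono_exp {F : I ≃o I} (hF : ∀ x, x ≤ F x) {m n : ℤ} (hmn : m ≤ n) (x : I) :
    (F ^ m) x ≤ (F ^ n) x := by
  obtain ⟨k, rfl⟩ := Int.le.dest hmn
  induction k with
  | zero => simp
  | succ k ih =>
    refine (ih (by omega)).trans ?_
    rw [show m + ((k + 1 : ℕ) : ℤ) = 1 + (m + k) by push_cast; ring, zpow_add_app F 1, zpow_one]
    exact hF _

lemma zpow_fixed {F : I ≃o I} {x : I} (hx : F x = x) (n : ℤ) : (F ^ n) x = x := by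
  have h : F ∈ MulAction.stabilizer (I ≃o I) x := hx
  exact (MulAction.stabilizer (I ≃o I) x).zpow_mem h n

lemma zpow_lt_self_iff {F : I ≃o I} (hF : ∀ x, x ≤ F x) {x : I} (hx : F x ≠ x) (n : ℤ) :
    x < (F ^ n) x ↔ 0 < n := by
  constructor
  · intro h
    by_contra hn
    have := zpow_mono_exp hF (not_lt.1 hn) x
    rw [zpow_zero] at this
    exact absurd h (not_lt.2 this)
  · intro h
    have := zpow_mono_exp hF (show (1 : ℤ) ≤ n by omega) x
    rw [zpow_one] at this
    exact (lt_of_le_of_ne (hF x) (Ne.symm hx)).trans_le this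

/-! ### Back-and-forth -/

/-- The data for the back-and-forth construction: an expanding order automorphism `F` of `[0,1]`,
a colour `c` (the sign of the original homeomorphism), and a countable dense set `A` containing the
endpoints and no other fixed point. Separation `∀ n, F ^ n x < y` says that a fixed point lies
between `x` and `y`; then points of either colour occur strictly between their components. -/
structure ColoredSystem (F : I ≃o I) (c : I → Prop) (A : Set I) : Prop where
  le_app : ∀ x, x ≤ F x
  countable : A.Countable
  exists_between : ∀ x y, x < y → ∃ a ∈ A, x < a ∧ a < y
  zero_mem : 0 ∈ A
  one_mem : 1 ∈ A
  fixed : ∀ a ∈ A, F a = a → a = 0 ∨ a = 1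
  not_color_zero : ¬ c 0
  not_color_one : ¬ c 1
  color : ∀ x b n, x < b → b < (F ^ (n : ℤ)) x → (c x ↔ c b)
  rich : ∀ x ∈ A, ∀ y ∈ A, (∀ n : ℤ, (F ^ n) x < y) → ∀ s : Prop,
    ∃ b ∈ A, F b ≠ b ∧ (c b ↔ s) ∧ ∀ n : ℤ, (F ^ n) x < b ∧ b < (F ^ n) y

/-- Colours are constant along orbits: for `n > 0` and `x` not fixed,
`x < F ^ n x < F ^ (n + 1) x`. -/
lemma ColoredSystem.color_zpow {F : I ≃o I} {c : I → Prop} {A : Set I} (hF : ColoredSystem F c A)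
    (x : I) (n : ℤ) : c x ↔ c ((F ^ n) x) := by
  by_cases hx : F x = x
  · rw [zpow_fixed hx]
  have pos : ∀ x, F x ≠ x → ∀ n : ℤ, 0 < n → (c x ↔ c ((F ^ n) x)) := by
    intro x hx n hn
    refine hF.color x _ (n + 1) ((zpow_lt_self_iff hF.le_app hx n).2 hn) ?_
    rw [zpow_add_app, OrderIso.lt_iff_lt, zpow_one]
    exact lt_of_le_of_ne (hF.le_app x) (Ne.symm hx)
  rcases lt_trichotomy n 0 with hn | rfl | hn
  · have hx' : F ((F ^ n) x) ≠ (F ^ n) x := by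
      intro h
      have h2 := zpow_fixed h (-n)
      rw [← zpow_add_app, neg_add_cancel, zpow_zero] at h2
      rw [← h2] at h
      exact hx h
    have := pos _ hx' (-n) (by omega)
    rw [← zpow_add_app, neg_add_cancel, zpow_zero] at this
    exact this.symm
  · simp
  · exact pos x hx n hn

/-- Finite partial isomorphisms between two coloured systems, as finite sets of pairs: they preserve
colours and the order relation between all points of the orbits involved. -/
structure IsPartialIso (F : I ≃o I) (c : I → Prop) (A : Set I) (H : I ≃o I) (d : I → Prop)
    (B : Set I) (p : Finset (I × I)) : Prop where
  zero_mem : ((0 : I), (0 : I)) ∈ p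
  one_mem : ((1 : I), (1 : I)) ∈ p
  left_mem : ∀ q ∈ p, q.1 ∈ A
  right_mem : ∀ q ∈ p, q.2 ∈ B
  color : ∀ q ∈ p, (c q.1 ↔ d q.2)
  lt_iff : ∀ q ∈ p, ∀ r ∈ p, ∀ n : ℤ, q.1 < (F ^ n) r.1 ↔ q.2 < (H ^ n) r.2

section backAndForth

variable {F H : I ≃o I} {c d : I → Prop} {A B : Set I} {p : Finset (I × I)}

lemma IsPartialIso.swap (h : IsPartialIso F c A H d B p) :
    IsPartialIso H d B F c A (p.image Prod.swap) where
  zero_mem := Finset.mem_image.2 ⟨_, h.zero_mem, rfl⟩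
  one_mem := Finset.mem_image.2 ⟨_, h.one_mem, rfl⟩
  left_mem := by
    intro q hq
    obtain ⟨r, hr, rfl⟩ := Finset.mem_image.1 hq
    exact h.right_mem r hr
  right_mem := by
    intro q hq
    obtain ⟨r, hr, rfl⟩ := Finset.mem_image.1 hq
    exact h.left_mem r hr
  color := by
    intro q hq
    obtain ⟨r, hr, rfl⟩ := Finset.mem_image.1 hq
    exact (h.color r hr).symm
  lt_iff := by
    intro q hq q' hq' n
    obtain ⟨r, hr, rfl⟩ := Finset.mem_image.1 hq
    obtain ⟨r', hr', rfl⟩ := Finset.mem_image.1 hq'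
    exact (h.lt_iff r hr r' hr' n).symm

lemma IsPartialIso.zpow_lt_iff (h : IsPartialIso F c A H d B p) {q r : I × I} (hq : q ∈ p)
    (hr : r ∈ p) (m n : ℤ) : (F ^ m) q.1 < (F ^ n) r.1 ↔ (H ^ m) q.2 < (H ^ n) r.2 := by
  rw [_root_.zpow_lt_iff, _root_.zpow_lt_iff, h.lt_iff q hq r hr]

/-- To add a pair to a partial isomorphism it suffices to compare the new pair with the
iterates of the old ones: the relations in which the new point is iterated are equivalent to
these. -/
lemma IsPartialIso.insert_pair (h : IsPartialIso F c A H d B p) {a b : I} (ha : a ∈ A) (hb : b ∈ B)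
    (hcol : c a ↔ d b) (hself : ∀ n : ℤ, a < (F ^ n) a ↔ b < (H ^ n) b)
    (h1 : ∀ q ∈ p, ∀ n : ℤ, a < (F ^ n) q.1 ↔ b < (H ^ n) q.2)
    (h2 : ∀ q ∈ p, ∀ n : ℤ, (F ^ n) q.1 < a ↔ (H ^ n) q.2 < b) :
    IsPartialIso F c A H d B (insert (a, b) p) where
  zero_mem := Finset.mem_insert_of_mem h.zero_mem
  one_mem := Finset.mem_insert_of_mem h.one_mem
  left_mem := by
    intro q hq
    rcases Finset.mem_insert.1 hq with rfl | hq
    exacts [ha, h.left_mem q hq]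
  right_mem := by
    intro q hq
    rcases Finset.mem_insert.1 hq with rfl | hq
    exacts [hb, h.right_mem q hq]
  color := by
    intro q hq
    rcases Finset.mem_insert.1 hq with rfl | hq
    exacts [hcol, h.color q hq]
  lt_iff := by
    intro q hq r hr n
    rcases Finset.mem_insert.1 hq with rfl | hq <;> rcases Finset.mem_insert.1 hr with rfl | hr
    · exact hself n
    · exact h1 r hr n
    · have := h2 q hq (-n)
      rwa [zpow_app_lt_iff, zpow_app_lt_iff, neg_neg] at this
    · exact h.lt_iff q hq r hr n

/-- If `x` has iterates on both sides of `a`, but none equal to `a`, two consecutive ones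
enclose `a`. -/
lemma exists_zpow_lt_lt (hF : ∀ x, x ≤ F x) {a x : I} (hne : ∀ n : ℤ, (F ^ n) x ≠ a)
    (h1 : ∃ n : ℤ, (F ^ n) x < a) (h2 : ∃ n : ℤ, a < (F ^ n) x) :
    ∃ n : ℤ, (F ^ n) x < a ∧ a < (F ^ (n + 1)) x := by
  obtain ⟨m, hm⟩ := h2
  obtain ⟨n, hn, hmax⟩ := Int.exists_greatest_of_bdd (P := fun n : ℤ => (F ^ n) x < a)
    ⟨m, fun z hz => by
      by_contra hlt
      exact absurd (hm.trans_le (zpow_mono_exp hF (not_le.1 hlt).le x)) (not_lt.2 hz.le)⟩ h1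
  refine ⟨n, hn, lt_of_le_of_ne (not_lt.1 fun hlt => ?_) (hne _).symm⟩
  have := hmax _ hlt
  omega

/-- If the orbit of `x` stays below `a`, while `y` has iterates on both sides of `a`, then the orbit
of `x` stays below that of `y`. -/
lemma orbit_lt_orbit (F : I ≃o I) {a x y : I} (hx : ∀ n : ℤ, (F ^ n) x < a)
    (hy : ∃ n : ℤ, a < (F ^ n) y) (n m : ℤ) : (F ^ n) x < (F ^ m) y := by
  obtain ⟨k, hk⟩ := hy
  have := (hx (k - m + n)).trans hk
  rw [zpow_lt_iff] at this ⊢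
  convert this using 3
  ring

/-- The mirror image of `orbit_lt_orbit`. -/
lemma orbit_lt_orbit' (F : I ≃o I) {a x y : I} (hx : ∀ n : ℤ, a < (F ^ n) x)
    (hy : ∃ n : ℤ, (F ^ n) y < a) (n m : ℤ) : (F ^ m) y < (F ^ n) x := by
  obtain ⟨k, hk⟩ := hy
  have := hk.trans (hx (k - m + n))
  rw [zpow_lt_iff] at this ⊢
  convert this using 3
  ring

/-- Extension step when `a` lies in a component that the domain of `p` already meets. -/
lemma exists_cut_of_mem_component (hH : ColoredSystem H d B) (hF : ColoredSystem F c A)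
    (hp : IsPartialIso F c A H d B p) {a : I} (hne : ∀ q ∈ p, ∀ n : ℤ, (F ^ n) q.1 ≠ a)
    {q₀ : I × I} (hq₀ : q₀ ∈ p) {k : ℤ} (hk1 : (F ^ k) q₀.1 < a) (hk2 : a < (F ^ (k + 1)) q₀.1) :
    ∃ b ∈ B, H b ≠ b ∧ (c a ↔ d b) ∧ (∀ q ∈ p, ∀ n : ℤ, (F ^ n) q.1 < a → (H ^ n) q.2 < b) ∧
      ∀ q ∈ p, ∀ n : ℤ, a < (F ^ n) q.1 → b < (H ^ n) q.2 := by
  classical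
  -- `N q` is the exponent with `F ^ (N q) q.1 < a < F ^ (N q + 1) q.1`, if there is one.
  have hN : ∀ q : I × I, ∃ N : ℤ, q ∈ p → (∃ n : ℤ, (F ^ n) q.1 < a) →
      (∃ n : ℤ, a < (F ^ n) q.1) → (F ^ N) q.1 < a ∧ a < (F ^ (N + 1)) q.1 := by
    intro q
    by_cases h : q ∈ p ∧ (∃ n : ℤ, (F ^ n) q.1 < a) ∧ (∃ n : ℤ, a < (F ^ n) q.1)
    · obtain ⟨N, hN⟩ := exists_zpow_lt_lt hF.le_app (hne q h.1) h.2.1 h.2.2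
      exact ⟨N, fun _ _ _ => hN⟩
    · exact ⟨0, fun h1 h2 h3 => (h ⟨h1, h2, h3⟩).elim⟩
  choose N hN using hN
  let P := p.filter fun q => (∃ n : ℤ, (F ^ n) q.1 < a) ∧ (∃ n : ℤ, a < (F ^ n) q.1)
  have hPmem : ∀ q ∈ P, q ∈ p ∧ (F ^ (N q)) q.1 < a ∧ a < (F ^ (N q + 1)) q.1 := by
    intro q hq
    obtain ⟨h1, h2, h3⟩ := Finset.mem_filter.1 hq
    exact ⟨h1, hN q h1 h2 h3⟩
  have hq₀P : q₀ ∈ P := Finset.mem_filter.2 ⟨hq₀, ⟨_, hk1⟩, ⟨_, hk2⟩⟩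
  obtain ⟨l, hl, hlmax⟩ := P.exists_max_image (fun q => (H ^ (N q)) q.2) ⟨q₀, hq₀P⟩
  obtain ⟨r, hr, hrmin⟩ := P.exists_min_image (fun q => (H ^ (N q + 1)) q.2) ⟨q₀, hq₀P⟩
  have hlr : (H ^ (N l)) l.2 < (H ^ (N r + 1)) r.2 :=
    (hp.zpow_lt_iff (hPmem l hl).1 (hPmem r hr).1 _ _).1
      ((hPmem l hl).2.1.trans (hPmem r hr).2.2)
  obtain ⟨b, hb, hlb, hbr⟩ := hH.exists_between _ _ hlr
  have hL : ∀ q ∈ P, (H ^ (N q)) q.2 < b := fun q hq => (hlmax q hq).trans_lt hlb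
  have hR : ∀ q ∈ P, b < (H ^ (N q + 1)) q.2 := fun q hq => hbr.trans_le (hrmin q hq)
  have hb0 := hL q₀ hq₀P
  have hb1 := hR q₀ hq₀P
  refine ⟨b, hb, ?_, ?_, ?_, ?_⟩
  · intro hfix
    have h : H ((H ^ (N q₀)) q₀.2) < H b := H.lt_iff_lt.2 hb0
    rw [hfix] at h
    rw [add_comm, zpow_add_app, zpow_one] at hb1
    exact lt_asymm h hb1
  · have e1 := hF.color ((F ^ k) q₀.1) a 1 hk1 (by rwa [← zpow_add_app, add_comm])
    have e2 := hH.color ((H ^ (N q₀)) q₀.2) b 1 hb0 (by rwa [← zpow_add_app, add_comm])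
    rw [← e1, ← e2, ← hF.color_zpow, ← hH.color_zpow]
    exact hp.color q₀ hq₀
  · intro q hq n hn
    by_cases hq' : ∃ n : ℤ, a < (F ^ n) q.1
    · have hqP : q ∈ P := Finset.mem_filter.2 ⟨hq, ⟨n, hn⟩, hq'⟩
      refine lt_of_le_of_lt (zpow_mono_exp hH.le_app (?_ : n ≤ N q) _) (hL q hqP)
      by_contra hlt
      have := zpow_mono_exp hF.le_app (show N q + 1 ≤ n by omega) q.1
      exact lt_asymm hn ((hPmem q hqP).2.2.trans_le this)
    · push Not at hq'
      have : ∀ n : ℤ, (F ^ n) q.1 < a := fun n => lt_of_le_of_ne (hq' n) (hne q hq n)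
      exact ((hp.zpow_lt_iff hq hq₀ _ _).1 (orbit_lt_orbit F this ⟨_, hk2⟩ n (N q₀))).trans hb0
  · intro q hq n hn
    by_cases hq' : ∃ n : ℤ, (F ^ n) q.1 < a
    · have hqP : q ∈ P := Finset.mem_filter.2 ⟨hq, hq', ⟨n, hn⟩⟩
      refine lt_of_lt_of_le (hR q hqP) (zpow_mono_exp hH.le_app (?_ : N q + 1 ≤ n) _)
      by_contra hlt
      have := zpow_mono_exp hF.le_app (show n ≤ N q by omega) q.1
      exact lt_asymm hn (this.trans_lt (hPmem q hqP).2.1)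
    · push Not at hq'
      have : ∀ n : ℤ, a < (F ^ n) q.1 := fun n => lt_of_le_of_ne (hq' n) (hne q hq n).symm
      exact hb1.trans ((hp.zpow_lt_iff hq₀ hq _ _).1 (orbit_lt_orbit' F this ⟨_, hk1⟩ n (N q₀ + 1)))

/-- Extension step when the component of `a` does not meet the domain of `p`: every orbit of the
domain lies on one side of `a`, and `b` is taken in a new component of the right colour. -/
lemma exists_cut_of_notMem_component (hH : ColoredSystem H d B)
    (hp : IsPartialIso F c A H d B p) {a : I} (hne : ∀ q ∈ p, ∀ n : ℤ, (F ^ n) q.1 ≠ a)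
    (hsep : ∀ q ∈ p, (∀ n : ℤ, (F ^ n) q.1 < a) ∨ ∀ n : ℤ, a < (F ^ n) q.1) :
    ∃ b ∈ B, H b ≠ b ∧ (c a ↔ d b) ∧ (∀ q ∈ p, ∀ n : ℤ, (F ^ n) q.1 < a → (H ^ n) q.2 < b) ∧
      ∀ q ∈ p, ∀ n : ℤ, a < (F ^ n) q.1 → b < (H ^ n) q.2 := by
  classical
  have ha0 : 0 < a := lt_of_le_of_ne unitInterval.nonneg' (by simpa using hne _ hp.zero_mem 0)
  have ha1 : a < 1 :=
    lt_of_le_of_ne unitInterval.le_one' (Ne.symm (by simpa using hne _ hp.one_mem 0))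
  obtain ⟨l, hl, hlmax⟩ := (p.filter fun q => q.1 < a).exists_max_image Prod.fst
    ⟨(0, 0), Finset.mem_filter.2 ⟨hp.zero_mem, ha0⟩⟩
  obtain ⟨r, hr, hrmin⟩ := (p.filter fun q => a < q.1).exists_min_image Prod.fst
    ⟨(1, 1), Finset.mem_filter.2 ⟨hp.one_mem, ha1⟩⟩
  obtain ⟨hlp, hla⟩ := Finset.mem_filter.1 hl
  obtain ⟨hrp, hra⟩ := Finset.mem_filter.1 hr
  have below : ∀ q ∈ p, ∀ n : ℤ, (F ^ n) q.1 < a → ∀ m : ℤ, (F ^ m) q.1 < a := by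
    intro q hq n hn
    rcases hsep q hq with h | h
    exacts [h, (lt_asymm hn (h n)).elim]
  have above : ∀ q ∈ p, ∀ n : ℤ, a < (F ^ n) q.1 → ∀ m : ℤ, a < (F ^ m) q.1 := by
    intro q hq n hn
    rcases hsep q hq with h | h
    exacts [(lt_asymm hn (h n)).elim, h]
  have hlall := below l hlp 0 (by simpa using hla)
  have hrall := above r hrp 0 (by simpa using hra)
  have hlr : ∀ n : ℤ, (H ^ n) l.2 < r.2 := by
    intro n
    have := (hp.zpow_lt_iff hlp hrp n 0).1 ((hlall n).trans (hrall 0))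
    simpa using this
  obtain ⟨b, hb, hbfix, hbcol, hbcut⟩ :=
    hH.rich l.2 (hp.right_mem l hlp) r.2 (hp.right_mem r hrp) hlr (c a)
  refine ⟨b, hb, hbfix, hbcol.symm, ?_, ?_⟩
  · intro q hq n hn
    have hqa : q.1 < a := by simpa using below q hq n hn 0
    have hql : q.1 ≤ l.1 := hlmax q (Finset.mem_filter.2 ⟨hq, hqa⟩)
    refine lt_of_le_of_lt ?_ (hbcut n).1
    rw [OrderIso.le_iff_le, ← not_lt]
    have := hp.zpow_lt_iff hlp hq 0 0
    simp only [zpow_zero, RelIso.one_apply] at this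
    rw [← this]
    exact not_lt.2 hql
  · intro q hq n hn
    have hqa : a < q.1 := by simpa using above q hq n hn 0
    have hrq : r.1 ≤ q.1 := hrmin q (Finset.mem_filter.2 ⟨hq, hqa⟩)
    refine lt_of_lt_of_le (hbcut n).2 ?_
    rw [OrderIso.le_iff_le, ← not_lt]
    have := hp.zpow_lt_iff hq hrp 0 0
    simp only [zpow_zero, RelIso.one_apply] at this
    rw [← this]
    exact not_lt.2 hrq

/-- Every point of `A` can be put into an orbit of the domain. -/
lemma IsPartialIso.exists_extend (hF : ColoredSystem F c A) (hH : ColoredSystem H d B)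
    (hp : IsPartialIso F c A H d B p) {a : I} (ha : a ∈ A) :
    ∃ p', p ⊆ p' ∧ IsPartialIso F c A H d B p' ∧ ∃ q ∈ p', ∃ n : ℤ, (F ^ n) q.1 = a := by
  classical
  by_cases hne : ∃ q ∈ p, ∃ n : ℤ, (F ^ n) q.1 = a
  · exact ⟨p, subset_rfl, hp, hne⟩
  push Not at hne
  have hcut : ∃ b ∈ B, H b ≠ b ∧ (c a ↔ d b) ∧
      (∀ q ∈ p, ∀ n : ℤ, (F ^ n) q.1 < a → (H ^ n) q.2 < b) ∧
      ∀ q ∈ p, ∀ n : ℤ, a < (F ^ n) q.1 → b < (H ^ n) q.2 := by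
    by_cases hsep : ∀ q ∈ p, (∀ n : ℤ, (F ^ n) q.1 < a) ∨ ∀ n : ℤ, a < (F ^ n) q.1
    · exact exists_cut_of_notMem_component hH hp hne hsep
    · push Not at hsep
      obtain ⟨q₀, hq₀, ⟨m, hm⟩, ⟨n, hn⟩⟩ := hsep
      obtain ⟨k, hk1, hk2⟩ := exists_zpow_lt_lt hF.le_app (hne q₀ hq₀)
        ⟨n, lt_of_le_of_ne hn (hne q₀ hq₀ n)⟩ ⟨m, lt_of_le_of_ne hm (hne q₀ hq₀ m).symm⟩
      exact exists_cut_of_mem_component hH hF hp hne hq₀ hk1 hk2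
  obtain ⟨b, hb, hbfix, hcol, hlow, hup⟩ := hcut
  have hafix : F a ≠ a := by
    intro h
    rcases hF.fixed a ha h with rfl | rfl
    · exact hne _ hp.zero_mem 0 (by simp)
    · exact hne _ hp.one_mem 0 (by simp)
  refine ⟨insert (a, b) p, Finset.subset_insert _ _, hp.insert_pair ha hb hcol ?_ ?_ ?_,
    (a, b), Finset.mem_insert_self _ _, 0, by simp⟩
  · intro n
    rw [zpow_lt_self_iff hF.le_app hafix, zpow_lt_self_iff hH.le_app hbfix]
  · intro q hq n
    refine ⟨hup q hq n, fun h => ?_⟩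
    by_contra hlt
    exact lt_asymm h (hlow q hq n (lt_of_le_of_ne (not_lt.1 hlt) (hne q hq n)))
  · intro q hq n
    refine ⟨hlow q hq n, fun h => ?_⟩
    by_contra hlt
    exact lt_asymm h (hup q hq n (lt_of_le_of_ne (not_lt.1 hlt) (hne q hq n).symm))

lemma IsPartialIso.exists_extend_right (hF : ColoredSystem F c A) (hH : ColoredSystem H d B)
    (hp : IsPartialIso F c A H d B p) {b : I} (hb : b ∈ B) :
    ∃ p', p ⊆ p' ∧ IsPartialIso F c A H d B p' ∧ ∃ q ∈ p', ∃ n : ℤ, (H ^ n) q.2 = b := by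
  classical
  obtain ⟨p', hpp', hp', q, hq, n, hn⟩ := hp.swap.exists_extend hH hF hb
  refine ⟨p'.image Prod.swap, fun r hr => ?_, hp'.swap, q.swap,
    Finset.mem_image_of_mem _ hq, n, hn⟩
  exact Finset.mem_image.2 ⟨r.swap, hpp' (Finset.mem_image_of_mem _ hr), r.swap_swap⟩

/-- Back-and-forth: closing under the dynamics the union of a directed family of finite partial
isomorphisms gives a relation whose domain contains `A` and whose range contains `B`, and which
preserves the order, the dynamics and the colours. -/
lemma exists_dense_iso (hF : ColoredSystem F c A) (hH : ColoredSystem H d B) :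
    ∃ R : I → I → Prop,
      (∀ a b a' b', R a b → R a' b' → (a < a' ↔ b < b')) ∧
      (∀ a ∈ A, ∃ b, R a b) ∧ (∀ b ∈ B, ∃ a, R a b) ∧
      (∀ a b, R a b → ∀ n : ℤ, R ((F ^ n) a) ((H ^ n) b)) ∧
      (∀ a b, R a b → (c a ↔ d b)) := by
  classical
  let P := {p : Finset (I × I) // IsPartialIso F c A H d B p}
  have hp₀ : IsPartialIso F c A H d B {(0, 0), (1, 1)} := by
    have f0 : ∀ n : ℤ, (F ^ n) 0 = 0 := fun n => (F ^ n).map_bot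
    have f1 : ∀ n : ℤ, (F ^ n) 1 = 1 := fun n => (F ^ n).map_top
    have g0 : ∀ n : ℤ, (H ^ n) 0 = 0 := fun n => (H ^ n).map_bot
    have g1 : ∀ n : ℤ, (H ^ n) 1 = 1 := fun n => (H ^ n).map_top
    constructor <;> simp [hF.zero_mem, hF.one_mem, hH.zero_mem, hH.one_mem, f0, f1, g0, g1,
      hF.not_color_zero, hF.not_color_one, hH.not_color_zero, hH.not_color_one]
  have := hF.countable.to_subtype
  have := hH.countable.to_subtype
  let _ := Encodable.ofCountable (A ⊕ B)
  let D : A ⊕ B → Order.Cofinal P := Sum.elim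
    (fun a => ⟨{p | ∃ q ∈ p.1, ∃ n : ℤ, (F ^ n) q.1 = a}, fun p => by
      obtain ⟨p', h1, h2, h3⟩ := p.2.exists_extend hF hH a.2
      exact ⟨⟨p', h2⟩, h3, h1⟩⟩)
    (fun b => ⟨{p | ∃ q ∈ p.1, ∃ n : ℤ, (H ^ n) q.2 = b}, fun p => by
      obtain ⟨p', h1, h2, h3⟩ := p.2.exists_extend_right hF hH b.2
      exact ⟨⟨p', h2⟩, h3, h1⟩⟩)
  let J := Order.idealOfCofinals (⟨_, hp₀⟩ : P) D
  have hJ : ∀ i, ∃ x ∈ D i, x ∈ J := Order.cofinal_meets_idealOfCofinals _ D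
  refine ⟨fun a b => ∃ p ∈ J, ∃ q ∈ p.1, ∃ n : ℤ, (F ^ n) q.1 = a ∧ (H ^ n) q.2 = b,
    ?_, ?_, ?_, ?_, ?_⟩
  · rintro _ _ _ _ ⟨p, hp, q, hq, n, rfl, rfl⟩ ⟨p', hp', q', hq', n', rfl, rfl⟩
    obtain ⟨r, -, h1, h2⟩ := J.directed _ hp _ hp'
    exact r.2.zpow_lt_iff (h1 hq) (h2 hq') n n'
  · intro a ha
    obtain ⟨p, ⟨q, hq, n, hn⟩, hp⟩ := hJ (Sum.inl ⟨a, ha⟩)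
    exact ⟨_, p, hp, q, hq, n, hn, rfl⟩
  · intro b hb
    obtain ⟨p, ⟨q, hq, n, hn⟩, hp⟩ := hJ (Sum.inr ⟨b, hb⟩)
    exact ⟨_, p, hp, q, hq, n, rfl, hn⟩
  · rintro _ _ ⟨p, hp, q, hq, m, rfl, rfl⟩ n
    exact ⟨p, hp, q, hq, n + m, zpow_add_app _ _ _ _, zpow_add_app _ _ _ _⟩
  · rintro _ _ ⟨p, hp, q, hq, m, rfl, rfl⟩
    rw [← hF.color_zpow, ← hH.color_zpow]
    exact p.2.color q hq

end backAndForth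

/-! ### Extending order isomorphisms of dense sets -/

/-- An order isomorphism between dense subsets of `[0,1]` extends to `[0,1]`. -/
lemma exists_orderIso_extend {R : I → I → Prop}
    (hlt : ∀ a b a' b', R a b → R a' b' → (a < a' ↔ b < b'))
    (hdom : ∀ x y : I, x < y → ∃ a b, R a b ∧ x < a ∧ a < y)
    (hran : ∀ x y : I, x < y → ∃ a b, R a b ∧ x < b ∧ b < y) :
    ∃ g : I ≃o I, ∀ a b, R a b → g a = b := by
  let φ : I → I := fun x => sSup {b | ∃ a, R a b ∧ a ≤ x}
  have hle : ∀ a b x, R a b → a ≤ x → b ≤ φ x := fun a b x h hx => le_sSup ⟨a, h, hx⟩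
  have hge : ∀ a b x, R a b → x ≤ a → φ x ≤ b := by
    intro a b x h hx
    refine sSup_le ?_
    rintro b' ⟨a', h', hx'⟩
    rw [← not_lt, ← hlt _ _ _ _ h h', not_lt]
    exact hx'.trans hx
  have hmono : StrictMono φ := by
    intro x y hxy
    obtain ⟨a, b, h, hxa, hay⟩ := hdom x y hxy
    obtain ⟨a', b', h', haa', hay'⟩ := hdom a y hay
    exact (hge a b x h hxa.le).trans_lt
      (((hlt _ _ _ _ h h').1 haa').trans_le (hle a' b' y h' hay'.le))
  have hsurj : Function.Surjective φ := by
    intro y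
    refine ⟨sSup {a | ∃ b, R a b ∧ b ≤ y}, le_antisymm ?_ ?_⟩
    · by_contra! hy
      obtain ⟨a, b, h, hyb, hb⟩ := hran _ _ hy
      refine absurd hb (not_lt.2 (hge a b _ h (sSup_le ?_)))
      rintro a' ⟨b', h', hb'⟩
      rw [← not_lt, hlt _ _ _ _ h h', not_lt]
      exact hb'.trans hyb.le
    · by_contra! hy
      obtain ⟨a, b, h, hb, hby⟩ := hran _ _ hy
      exact absurd hb (not_lt.2 (hle a b _ h (le_sSup ⟨b, h, hby.le⟩)))
  exact ⟨hmono.orderIsoOfSurjective φ hsurj,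
    fun a b h => le_antisymm (hge a b a h le_rfl) (hle a b a h le_rfl)⟩

/-! ### The expanding automorphism `max f f⁻¹` and conjugacy of rich homeomorphisms -/

lemma OPH.strictMono (f : OPH) : StrictMono f.1 := f.2.strictMono_of_injective f.1.injective

lemma OPH.strictMono_symm (f : OPH) : StrictMono f.1.symm := by
  intro x y hxy
  rw [← f.strictMono.lt_iff_lt]
  simpa using hxy

/-- The expanding automorphism `max f f⁻¹`, which is `f` on the positive components and `f⁻¹` on the
negative ones. -/
def OPH.expand (f : OPH) : I ≃o I :=
  StrictMono.orderIsoOfSurjective (fun x => max (f.1 x) (f.1.symm x))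
    (fun _ _ hxy => max_lt_max (f.strictMono hxy) (f.strictMono_symm hxy))
    (fun y => mem_range_of_exists_le_of_exists_ge (f.1.continuous.max f.1.symm.continuous)
      ⟨min (f.1 y) (f.1.symm y), max_le
        (by
          have := f.2 (min_le_right (f.1 y) (f.1.symm y))
          simpa using this)
        (by
          have := f.strictMono_symm.monotone (min_le_left (f.1 y) (f.1.symm y))
          simpa using this)⟩
      ⟨f.1 y, by simp⟩)

lemma OPH.expand_apply (f : OPH) (x : I) : f.expand x = max (f.1 x) (f.1.symm x) := rfl

lemma OPH.expand_of_le (f : OPH) {x : I} (hx : x ≤ f.1 x) : f.expand x = f.1 x := by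
  refine max_eq_left (le_trans ?_ hx)
  simpa using f.strictMono_symm.monotone hx

/-- Where `f x ≤ x`, the homeomorphism `f` is the inverse of `f.expand`. -/
lemma OPH.expand_symm_of_le (f : OPH) {x : I} (hx : f.1 x ≤ x) :
    (f.expand ^ (-1 : ℤ)) x = f.1 x := by
  have h : f.expand (f.1 x) = x := by
    rw [f.expand_apply, f.1.symm_apply_apply]
    exact max_eq_right ((f.2 hx).trans hx)
  conv_lhs => rw [← h]
  rw [← zpow_one f.expand, ← zpow_mul, ← zpow_add_app]
  simp

lemma OPH.le_expand (f : OPH) (x : I) : x ≤ f.expand x := by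
  rcases le_total x (f.1 x) with h | h
  · rwa [f.expand_of_le h]
  · refine le_max_of_le_right ?_
    simpa using f.strictMono_symm.monotone h

lemma OPH.expand_eq_iff (f : OPH) (x : I) : f.expand x = x ↔ f.1 x = x := by
  rcases le_total x (f.1 x) with h | h
  · rw [f.expand_of_le h]
  · rw [← f.expand_symm_of_le h]
    constructor
    · intro h
      exact zpow_fixed h _
    · intro h'
      have := zpow_fixed (F := f.expand ^ (-1 : ℤ)) h' (-1)
      rwa [← zpow_mul, show (-1 : ℤ) * -1 = 1 by norm_num, zpow_one] at this

lemma OPH.map_zero (f : OPH) : f.1 0 = 0 := by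
  have h := f.2 (show 0 ≤ f.1.symm 0 from unitInterval.nonneg')
  rw [f.1.apply_symm_apply] at h
  exact le_antisymm h unitInterval.nonneg'

lemma OPH.map_one (f : OPH) : f.1 1 = 1 := by
  have h := f.2 (show f.1.symm 1 ≤ 1 from unitInterval.le_one')
  rw [f.1.apply_symm_apply] at h
  exact le_antisymm unitInterval.le_one' h

/-- A sign change forces a fixed point. -/
lemma OPH.exists_fixed (f : OPH) {x y : I} (hxy : x ≤ y) (h : ¬ (x < f.1 x ↔ y < f.1 y)) :
    ∃ z, x ≤ z ∧ z ≤ y ∧ f.1 z = z := by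
  by_cases hx : x < f.1 x
  · have hy : f.1 y ≤ y := by
      by_contra hy
      exact h ⟨fun _ => not_le.1 hy, fun _ => hx⟩
    obtain ⟨z, hz, hfz⟩ := isPreconnected_Icc.intermediate_value₂ (Set.left_mem_Icc.2 hxy)
      (Set.right_mem_Icc.2 hxy) continuousOn_id f.1.continuous.continuousOn hx.le hy
    exact ⟨z, hz.1, hz.2, hfz.symm⟩
  · have hy : y < f.1 y := by
      by_contra hy
      exact h ⟨fun h => (hx h).elim, fun h => (hy h).elim⟩
    obtain ⟨z, hz, hfz⟩ := isPreconnected_Icc.intermediate_value₂ (Set.left_mem_Icc.2 hxy)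
      (Set.right_mem_Icc.2 hxy) f.1.continuous.continuousOn continuousOn_id (not_lt.1 hx) hy.le
    exact ⟨z, hz.1, hz.2, hfz⟩

/-- If `x` and `y` are each an endpoint of `[0,1]` or not fixed, and `[x, y]` contains a fixed point,
then between `x` and `y` there are points of both signs which fixed points separate from `x` and
`y`. -/
def Rich (f : OPH) : Prop :=
  ∀ x y : I, (f.1 x = x → x = 0 ∨ x = 1) → (f.1 y = y → y = 0 ∨ y = 1) → x < y →
    (∃ z, x ≤ z ∧ z ≤ y ∧ f.1 z = z) → ∀ s : Prop, ∃ v u w, x ≤ v ∧ v < u ∧ u < w ∧ w ≤ y ∧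
      f.1 v = v ∧ f.1 w = w ∧ f.1 u ≠ u ∧ (u < f.1 u ↔ s)

/-- The colour of a point records whether `f` moves it up. Since `f.expand` has increasing orbits whose
suprema are fixed points, separation by orbits amounts to separation by a fixed point. -/
lemma Rich.exists_system {f : OPH} (hf : Rich f) (hd : Dense {x : I | f.1 x ≠ x}) :
    ∃ A : Set I, Dense A ∧ ColoredSystem f.expand (fun x => x < f.1 x) A := by
  obtain ⟨t, htsub, htc, htd⟩ := hd.exists_countable_dense_subset
  have hAd : Dense (t ∪ {0, 1}) := htd.mono Set.subset_union_left
  have hfix : ∀ a ∈ t ∪ {0, 1}, f.1 a = a → a = 0 ∨ a = 1 := by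
    rintro a (ha | ha) h
    · exact (htsub ha h).elim
    · exact ha
  refine ⟨t ∪ {0, 1}, hAd, f.le_expand, htc.union (by simp), ?_, by simp, by simp, ?_, ?_, ?_,
    ?_, ?_⟩
  · intro x y hxy
    obtain ⟨a, ha, h⟩ := hAd.exists_between hxy
    exact ⟨a, ha, h.1, h.2⟩
  · intro a ha h
    exact hfix a ha ((f.expand_eq_iff a).1 h)
  · simp [f.map_zero]
  · simp [f.map_one]
  · intro x b n hxb hb
    by_contra hne
    obtain ⟨z, hxz, hzb, hz⟩ := f.exists_fixed hxb.le hne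
    have h1 : (f.expand ^ n) x ≤ (f.expand ^ n) z := (f.expand ^ n).monotone hxz
    rw [zpow_fixed ((f.expand_eq_iff z).2 hz)] at h1
    exact absurd hb (not_lt.2 (h1.trans hzb))
  · intro x hx y hy hsep s
    have hxy : x < y := by simpa using hsep 0
    -- The supremum of the orbit of `x` is a fixed point below `y`.
    have hz : ∃ z, x ≤ z ∧ z ≤ y ∧ f.1 z = z := by
      refine ⟨⨆ n : ℤ, (f.expand ^ n) x, ?_, iSup_le fun n => (hsep n).le, ?_⟩
      · simpa using le_iSup (fun n : ℤ => (f.expand ^ n) x) 0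
      · rw [← f.expand_eq_iff, OrderIso.map_iSup]
        refine Eq.trans ?_ ((Equiv.addLeft (1 : ℤ)).iSup_comp (g := fun n => (f.expand ^ n) x))
        refine iSup_congr fun n => ?_
        rw [Equiv.coe_addLeft, zpow_add_app, zpow_one]
    obtain ⟨v, u, w, hxv, hvu, huw, hwy, hv, hw, hu, hus⟩ :=
      hf x y (hfix x hx) (hfix y hy) hxy hz s
    have hb : ∃ b ∈ t ∪ {0, 1}, v < b ∧ b < w ∧ f.1 b ≠ b ∧ (b < f.1 b ↔ s) := by
      by_cases hs : s
      · obtain ⟨b, hbA, hbO⟩ := hAd.exists_mem_open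
          ((isOpen_Ioo (a := v) (b := w)).inter (isOpen_lt continuous_id f.1.continuous))
          ⟨u, ⟨hvu, huw⟩, hus.2 hs⟩
        have hb : b < f.1 b := hbO.2
        exact ⟨b, hbA, hbO.1.1, hbO.1.2, hb.ne', by simp [hs, hb]⟩
      · obtain ⟨b, hbA, hbO⟩ := hAd.exists_mem_open
          ((isOpen_Ioo (a := v) (b := w)).inter (isOpen_lt f.1.continuous continuous_id))
          ⟨u, ⟨hvu, huw⟩, lt_of_le_of_ne (not_lt.1 fun h => hs (hus.1 h)) hu⟩
        have hb : f.1 b < b := hbO.2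
        exact ⟨b, hbA, hbO.1.1, hbO.1.2, hb.ne, by simp [hs, hb.le]⟩
    obtain ⟨b, hbA, hvb, hbw, hbne, hbs⟩ := hb
    refine ⟨b, hbA, fun h => hbne ((f.expand_eq_iff b).1 h), hbs, fun n => ⟨?_, ?_⟩⟩
    · have h1 := (f.expand ^ n).monotone hxv
      rw [zpow_fixed ((f.expand_eq_iff v).2 hv)] at h1
      exact h1.trans_lt hvb
    · have h1 := (f.expand ^ n).monotone hwy
      rw [zpow_fixed ((f.expand_eq_iff w).2 hw)] at h1
      exact hbw.trans_le h1

/-- Two rich homeomorphisms with nowhere dense fixed point sets are conjugate. -/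
lemma Rich.conj {f h : OPH} (hf : Rich f) (hfd : Dense {x : I | f.1 x ≠ x}) (hh : Rich h)
    (hhd : Dense {x : I | h.1 x ≠ x}) : ∃ g : OPH, h.1 = g.1.trans (f.1.trans g.1.symm) := by
  obtain ⟨A, hAd, hA⟩ := hh.exists_system hhd
  obtain ⟨B, hBd, hB⟩ := hf.exists_system hfd
  obtain ⟨R, hlt, hdom, hran, hdyn, hcol⟩ := exists_dense_iso hA hB
  obtain ⟨g, hg⟩ := exists_orderIso_extend hlt
    (fun x y hxy => by
      obtain ⟨a, ha, h1, h2⟩ := hA.exists_between x y hxy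
      obtain ⟨b, hb⟩ := hdom a ha
      exact ⟨a, b, hb, h1, h2⟩)
    (fun x y hxy => by
      obtain ⟨b, hb, h1, h2⟩ := hB.exists_between x y hxy
      obtain ⟨a, ha⟩ := hran b hb
      exact ⟨a, b, ha, h1, h2⟩)
  -- On the dense set `A`, `h` is `h.expand` or its inverse according to the colour, and `f` at the
  -- corresponding point is given by the same power of `f.expand`.
  have hcomm : (fun x => g (h.1 x)) = fun x => f.1 (g x) := by
    refine Continuous.ext_on hAd (g.continuous.comp h.1.continuous)
      (f.1.continuous.comp g.continuous) fun a ha => ?_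
    obtain ⟨b, hb⟩ := hdom a ha
    rw [hg a b hb]
    by_cases hs : a < h.1 a
    · have h1 := hdyn a b hb 1
      rw [zpow_one, zpow_one, h.expand_of_le hs.le,
        f.expand_of_le ((hcol a b hb).1 hs).le] at h1
      exact hg _ _ h1
    · have h1 := hdyn a b hb (-1)
      rw [h.expand_symm_of_le (not_lt.1 hs),
        f.expand_symm_of_le (not_lt.1 fun h' => hs ((hcol a b hb).2 h'))] at h1
      exact hg _ _ h1
  refine ⟨⟨g.toHomeomorph, g.monotone⟩, Homeomorph.ext fun x => ?_⟩
  have := congrFun hcomm x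
  change h.1 x = g.symm (f.1 (g x))
  rw [← this, OrderIso.symm_apply_apply]

/-! ### The hypotheses on `f` give richness -/

lemma GenericCond.dense {f : OPH} (hf : GenericCond f) : Dense {x : I | f.1 x ≠ x} := by
  refine dense_of_exists_between fun {p q} hpq => ?_
  by_contra hno
  have hsub : Set.Ioo p q ⊆ {x : I | f.1 x = x} := by
    intro x hx
    by_contra hne
    exact hno ⟨x, hne, hx.1, hx.2⟩
  obtain ⟨r, hpr, hrq⟩ := exists_between hpq
  obtain ⟨s, hrs, hsq⟩ := exists_between hrq
  exact hrs.ne (hf.2.2.2.1 _ hsub isPreconnected_Ioo ⟨hpr, hrq⟩ ⟨hpr.trans hrs, hsq⟩)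

lemma ne_of_mem_comps {f : OPH} {S : Set I} (hS : S ∈ Comps f) {x : I} (hx : x ∈ S) :
    f.1 x ≠ x := by
  obtain ⟨y, -, rfl⟩ := hS
  exact connectedComponentIn_subset _ _ hx

lemma nonempty_of_mem_comps {f : OPH} {S : Set I} (hS : S ∈ Comps f) : S.Nonempty := by
  obtain ⟨y, hy, rfl⟩ := hS
  exact ⟨y, mem_connectedComponentIn hy⟩

lemma exists_mem_comps {f : OPH} {x : I} (hx : f.1 x ≠ x) : ∃ S ∈ Comps f, x ∈ S :=
  ⟨_, ⟨x, hx, rfl⟩, mem_connectedComponentIn hx⟩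

lemma ordConnected_of_mem_comps {f : OPH} {S : Set I} (hS : S ∈ Comps f) : S.OrdConnected := by
  obtain ⟨y, -, rfl⟩ := hS
  exact isPreconnected_connectedComponentIn.ordConnected

/-- Components with a fixed point between them are distinct. -/
lemma compLT_of_fixed {f : OPH} {S T : Set I} (hS : S ∈ Comps f) (hT : T ∈ Comps f) {x y z : I}
    (hx : x ∈ S) (hy : y ∈ T) (hxz : x ≤ z) (hzy : z ≤ y) (hz : f.1 z = z) : CompLT S T := by
  intro a ha b hb
  have haz : a < z := by
    by_contra h
    exact ne_of_mem_comps hS ((ordConnected_of_mem_comps hS).out hx ha ⟨hxz, not_lt.1 h⟩) hz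
  have hzb : z < b := by
    by_contra h
    exact ne_of_mem_comps hT ((ordConnected_of_mem_comps hT).out hb hy ⟨not_lt.1 h, hzy⟩) hz
  exact haz.trans hzb

/-- Distinct components have a fixed point between them. -/
lemma exists_fixed_of_compLT {f : OPH} {S T : Set I} (hS : S ∈ Comps f) (hT : T ∈ Comps f)
    (hST : CompLT S T) {x y : I} (hx : x ∈ S) (hy : y ∈ T) : ∃ z, x < z ∧ z < y ∧ f.1 z = z := by
  by_contra! hno
  have hxy := hST x hx y hy
  have hsub : Set.Icc x y ⊆ {z : I | f.1 z ≠ z} := by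
    intro z hz
    rcases eq_or_lt_of_le hz.1 with rfl | h1
    · exact ne_of_mem_comps hS hx
    rcases eq_or_lt_of_le hz.2 with rfl | h2
    · exact ne_of_mem_comps hT hy
    exact hno z h1 h2
  have hy' : y ∈ S := by
    obtain ⟨x₀, -, rfl⟩ := hS
    rw [connectedComponentIn_eq hx]
    exact isPreconnected_Icc.subset_connectedComponentIn (Set.left_mem_Icc.2 hxy.le) hsub
      (Set.right_mem_Icc.2 hxy.le)
  exact lt_irrefl y (hST y hy' y hy)

lemma OPH.pos_of_ne (f : OPH) {u : I} (hu : f.1 u ≠ u) : 0 < u :=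
  lt_of_le_of_ne unitInterval.nonneg' fun h => hu (by rw [← h, f.map_zero])

lemma OPH.lt_one_of_ne (f : OPH) {u : I} (hu : f.1 u ≠ u) : u < 1 :=
  lt_of_le_of_ne unitInterval.le_one' fun h => hu (by rw [h, f.map_one])

lemma GenericCond.rich {f : OPH} (hf : GenericCond f) : Rich f := by
  obtain ⟨x₀, hx₀, -⟩ := hf.dense.exists_between (zero_lt_one : (0 : I) < 1)
  obtain ⟨-, -, -, -, hp, hpl, hpr, hn, hnl, hnr⟩ := hf
  intro x y hx hy hxy hz s
  -- The density hypotheses for the sign encoded by `s`.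
  obtain ⟨hm, hl, hr⟩ : (∀ S ∈ Comps f, ∀ T ∈ Comps f, CompLT S T →
        ∃ U ∈ Comps f, (∀ u ∈ U, u < f.1 u ↔ s) ∧ CompLT S U ∧ CompLT U T) ∧
      (∀ S ∈ Comps f, ∃ T ∈ Comps f, (∀ u ∈ T, u < f.1 u ↔ s) ∧ CompLT T S) ∧
      (∀ S ∈ Comps f, ∃ T ∈ Comps f, (∀ u ∈ T, u < f.1 u ↔ s) ∧ CompLT S T) := by
    by_cases hs : s
    · have key : ∀ U, (∀ u ∈ U, u < f.1 u ↔ s) ↔ PosComp f U := by simp [hs, PosComp]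
      simp only [key]
      exact ⟨hp, hpl, hpr⟩
    · have key : ∀ U, NegComp f U → (∀ u ∈ U, u < f.1 u ↔ s) :=
        fun U h u hu => by simpa [hs] using (h u hu).le
      refine ⟨fun S hS T hT hST => ?_, fun S hS => ?_, fun S hS => ?_⟩
      · obtain ⟨U, hU, h1, h2⟩ := hn S hS T hT hST
        exact ⟨U, hU, key U h1, h2⟩
      · obtain ⟨U, hU, h1, h2⟩ := hnl S hS
        exact ⟨U, hU, key U h1, h2⟩
      · obtain ⟨U, hU, h1, h2⟩ := hnr S hS
        exact ⟨U, hU, key U h1, h2⟩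
  have hx' : x = 0 ∨ f.1 x ≠ x := by
    by_cases h : f.1 x = x
    · exact Or.inl ((hx h).resolve_right (hxy.trans_le unitInterval.le_one').ne)
    · exact Or.inr h
  have hy' : y = 1 ∨ f.1 y ≠ y := by
    by_cases h : f.1 y = y
    · exact Or.inl ((hy h).resolve_left (lt_of_le_of_lt unitInterval.nonneg' hxy).ne')
    · exact Or.inr h
  obtain ⟨U, hU, hUs, hUx, hUy⟩ : ∃ U ∈ Comps f, (∀ u ∈ U, u < f.1 u ↔ s) ∧
      (x = 0 ∨ ∃ S ∈ Comps f, x ∈ S ∧ CompLT S U) ∧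
      (y = 1 ∨ ∃ T ∈ Comps f, y ∈ T ∧ CompLT U T) := by
    rcases hx' with rfl | hx'
    · obtain ⟨T, hT, hyT⟩ : ∃ T ∈ Comps f, y = 1 ∨ y ∈ T := by
        rcases hy' with rfl | hy'
        · obtain ⟨T, hT, -⟩ := exists_mem_comps hx₀
          exact ⟨T, hT, Or.inl rfl⟩
        · obtain ⟨T, hT, hyT⟩ := exists_mem_comps hy'
          exact ⟨T, hT, Or.inr hyT⟩
      obtain ⟨U, hU, h1, h2⟩ := hl T hT
      exact ⟨U, hU, h1, Or.inl rfl, hyT.imp id fun h => ⟨T, hT, h, h2⟩⟩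
    · obtain ⟨S, hS, hxS⟩ := exists_mem_comps hx'
      rcases hy' with rfl | hy'
      · obtain ⟨U, hU, h1, h2⟩ := hr S hS
        exact ⟨U, hU, h1, Or.inr ⟨S, hS, hxS, h2⟩, Or.inl rfl⟩
      · obtain ⟨T, hT, hyT⟩ := exists_mem_comps hy'
        obtain ⟨z, hxz, hzy, hfz⟩ := hz
        obtain ⟨U, hU, h1, h2, h3⟩ := hm S hS T hT (compLT_of_fixed hS hT hxS hyT hxz hzy hfz)
        exact ⟨U, hU, h1, Or.inr ⟨S, hS, hxS, h2⟩, Or.inr ⟨T, hT, hyT, h3⟩⟩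
  obtain ⟨u, hu⟩ := nonempty_of_mem_comps hU
  have hune := ne_of_mem_comps hU hu
  obtain ⟨v, hxv, hvu, hv⟩ : ∃ v, x ≤ v ∧ v < u ∧ f.1 v = v := by
    rcases hUx with rfl | ⟨S, hS, hxS, hSU⟩
    · exact ⟨0, le_rfl, f.pos_of_ne hune, f.map_zero⟩
    · obtain ⟨v, h1, h2, h3⟩ := exists_fixed_of_compLT hS hU hSU hxS hu
      exact ⟨v, h1.le, h2, h3⟩
  obtain ⟨w, huw, hwy, hw⟩ : ∃ w, u < w ∧ w ≤ y ∧ f.1 w = w := by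
    rcases hUy with rfl | ⟨T, hT, hyT, hUT⟩
    · exact ⟨1, f.lt_one_of_ne hune, le_rfl, f.map_one⟩
    · obtain ⟨w, h1, h2, h3⟩ := exists_fixed_of_compLT hU hT hUT hu hyT
      exact ⟨w, h1, h2.le, h3⟩
  exact ⟨v, u, w, hxv, hvu, huw, hwy, hv, hw, hune, hUs u hu⟩

/-! ### Richness is a residual property -/

lemma continuous_eval_OPH : Continuous fun p : OPH × I => p.1.1 p.2 := by
  have h : Continuous fun f : OPH => (⟨(f.1 : I → I), f.1.continuous⟩ : C(I, I)) :=
    (Isometry.of_dist_eq (f := fun f : OPH => (⟨(f.1 : I → I), f.1.continuous⟩ : C(I, I)))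
      fun _ _ => rfl).continuous
  exact (h.comp continuous_fst).eval continuous_snd

lemma continuous_apply_OPH (x : I) : Continuous fun f : OPH => f.1 x :=
  continuous_eval_OPH.comp (continuous_id.prodMk continuous_const)

/-- The homeomorphisms with no fixed point in `[x, y]`, or with four points in `(x, y)` at
which the displacement has alternating signs. -/
def Osc (x y : I) : Set OPH :=
  {h | (∀ z ∈ Set.Icc x y, h.1 z ≠ z) ∨ ∃ u₁ u₂ u₃ u₄ : I, (x < u₁ ∧ u₁ < u₂ ∧ u₂ < u₃ ∧ u₃ < u₄ ∧
    u₄ < y) ∧ h.1 u₁ < u₁ ∧ u₂ < h.1 u₂ ∧ h.1 u₃ < u₃ ∧ u₄ < h.1 u₄}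

lemma isOpen_osc (x y : I) : IsOpen (Osc x y) := by
  rw [isOpen_iff_eventually]
  rintro h (hh | ⟨u₁, u₂, u₃, u₄, hu, s1, s2, s3, s4⟩)
  · have := isCompact_Icc.eventually_forall_of_forall_eventually
      (P := fun (h : OPH) (z : I) => h.1 z ≠ z) (x₀ := h) (K := Set.Icc x y) fun z hz =>
        (isOpen_ne_fun continuous_eval_OPH continuous_snd).mem_nhds (hh z hz)
    filter_upwards [this] with h' hh'
    exact Or.inl hh'
  · filter_upwards [(isOpen_lt (continuous_apply_OPH u₁) continuous_const).mem_nhds s1,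
      (isOpen_lt continuous_const (continuous_apply_OPH u₂)).mem_nhds s2,
      (isOpen_lt (continuous_apply_OPH u₃) continuous_const).mem_nhds s3,
      (isOpen_lt continuous_const (continuous_apply_OPH u₄)).mem_nhds s4] with h' t1 t2 t3 t4
    exact Or.inr ⟨u₁, u₂, u₃, u₄, hu, t1, t2, t3, t4⟩

lemma exists_OPH {φ : I → ℝ} (hm : StrictMono φ) (hc : Continuous φ) (h0 : φ 0 = 0)
    (h1 : φ 1 = 1) : ∃ h : OPH, ∀ u, ((h.1 u : I) : ℝ) = φ u := by
  have hmem : ∀ u, φ u ∈ Set.Icc (0 : ℝ) 1 := fun u =>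
    ⟨h0 ▸ hm.monotone unitInterval.nonneg', h1 ▸ hm.monotone unitInterval.le_one'⟩
  let ψ : I → I := fun u => ⟨φ u, hmem u⟩
  have hψm : StrictMono ψ := fun u v huv => hm huv
  have hψc : Continuous ψ := hc.subtype_mk _
  have hψs : Function.Surjective ψ := fun y =>
    mem_range_of_exists_le_of_exists_ge hψc
      ⟨0, by rw [show ψ 0 = 0 from Subtype.ext h0]; exact unitInterval.nonneg'⟩
      ⟨1, by rw [show ψ 1 = 1 from Subtype.ext h1]; exact unitInterval.le_one'⟩
  exact ⟨⟨(hψm.orderIsoOfSurjective ψ hψs).toHomeomorph, hψm.monotone⟩, fun u => rfl⟩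

/-- For large `N`, the increasing function `u ↦ u + sin (2πNu) / (4πN)` oscillates about the identity
on any given interval. -/
lemma exists_oscillating {a b : ℝ} (ha : 0 ≤ a) (hab : a < b) :
    ∃ k : ℝ → ℝ, StrictMono k ∧ Continuous k ∧ k 0 = 0 ∧ k 1 = 1 ∧ ∃ u₁ u₂ u₃ u₄ : ℝ,
      (a < u₁ ∧ u₁ < u₂ ∧ u₂ < u₃ ∧ u₃ < u₄ ∧ u₄ < b) ∧
      k u₁ < u₁ ∧ u₂ < k u₂ ∧ k u₃ < u₃ ∧ u₄ < k u₄ := by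
  obtain ⟨N, hN⟩ := exists_nat_gt (4 / (b - a))
  have hba : 0 < b - a := sub_pos.2 hab
  have hN0 : (0 : ℝ) < N := lt_trans (by positivity) hN
  have hNba : 4 < N * (b - a) := by rwa [div_lt_iff₀ hba] at hN
  have hπ := Real.pi_pos
  let k : ℝ → ℝ := fun u => u + Real.sin (2 * Real.pi * N * u) / (4 * Real.pi * N)
  have hkm : StrictMono k := by
    intro u v huv
    have h := (neg_le_abs _).trans
      (Real.abs_sin_sub_sin_le (2 * Real.pi * N * v) (2 * Real.pi * N * u))
    rw [abs_of_pos (by rw [← mul_sub]; have := sub_pos.2 huv; positivity)] at h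
    have h2 : Real.sin (2 * Real.pi * N * u) / (4 * Real.pi * N) -
        Real.sin (2 * Real.pi * N * v) / (4 * Real.pi * N) ≤ (v - u) / 2 := by
      rw [← sub_div, div_le_iff₀ (by positivity)]
      linarith
    change u + _ < v + _
    linarith
  have hlow : ∀ u, Real.sin (2 * Real.pi * N * u) = -1 → k u < u := by
    intro u hu
    change u + _ / _ < u
    rw [hu, neg_div]
    have : 0 < 1 / (4 * Real.pi * N) := by positivity
    linarith
  have hupp : ∀ u, Real.sin (2 * Real.pi * N * u) = 1 → u < k u := by
    intro u hu
    change u < u + _ / _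
    rw [hu]
    have : 0 < 1 / (4 * Real.pi * N) := by positivity
    linarith
  have hm1 := Nat.le_ceil (N * a)
  have hm2 := Nat.ceil_lt_add_one (show 0 ≤ N * a by positivity)
  set m := ⌈(N : ℝ) * a⌉₊
  -- The sine equals `-1, 1, -1, 1` at the phases `m + 3/4, m + 5/4, m + 7/4, m + 9/4`.
  have hsin1 : ∀ j : ℕ, Real.sin (2 * Real.pi * N * ((j + 3 / 4) / N)) = -1 := by
    intro j
    rw [show 2 * Real.pi * N * ((j + 3 / 4) / N) = -(Real.pi / 2) + ((j + 1 : ℕ) : ℝ) * (2 * Real.pi)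
      by field_simp; push_cast; ring, Real.sin_add_nat_mul_two_pi, Real.sin_neg, Real.sin_pi_div_two]
  have hsin2 : ∀ j : ℕ, Real.sin (2 * Real.pi * N * ((j + 5 / 4) / N)) = 1 := by
    intro j
    rw [show 2 * Real.pi * N * ((j + 5 / 4) / N) = Real.pi / 2 + ((j + 1 : ℕ) : ℝ) * (2 * Real.pi)
      by field_simp; push_cast; ring, Real.sin_add_nat_mul_two_pi, Real.sin_pi_div_two]
  refine ⟨k, hkm, by fun_prop, by simp [k], ?_, (m + 3 / 4) / N, (m + 5 / 4) / N,
    ((m + 1 : ℕ) + 3 / 4) / N, ((m + 1 : ℕ) + 5 / 4) / N, ⟨?_, ?_, ?_, ?_, ?_⟩,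
    hlow _ (hsin1 m), hupp _ (hsin2 m), hlow _ (hsin1 _), hupp _ (hsin2 _)⟩
  · have : Real.sin (2 * Real.pi * N * 1) = 0 := by
      rw [show 2 * Real.pi * N * 1 = ((2 * N : ℕ) : ℝ) * Real.pi by push_cast; ring,
        Real.sin_nat_mul_pi]
    change 1 + _ / _ = _
    rw [this]
    simp
  · rw [lt_div_iff₀ hN0]; linarith
  · gcongr; norm_num
  · rw [div_lt_div_iff_of_pos_right hN0]; push_cast; linarith
  · gcongr; norm_num
  · rw [div_lt_iff₀ hN0]; push_cast; linarith

/-- Near a fixed point in `[x, y]`, clamp an oscillating homeomorphism between `h - δ` and `h + δ`. -/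
lemma dense_osc {x y : I} (hxy : x < y) : Dense (Osc x y) := by
  rw [Metric.dense_iff]
  intro h ε hε
  by_cases hfix : ∀ z ∈ Set.Icc x y, h.1 z ≠ z
  · exact ⟨h, Metric.mem_ball_self hε, Or.inl hfix⟩
  push Not at hfix
  obtain ⟨z, hz, hfz⟩ := hfix
  obtain ⟨δ, hδ, hδε⟩ := exists_between hε
  have hcont : Continuous fun u : I => ((h.1 u : I) : ℝ) :=
    continuous_subtype_val.comp h.1.continuous
  have hW : IsOpen {u : I | |((h.1 u : I) : ℝ) - u| < δ} :=
    isOpen_lt (hcont.sub continuous_subtype_val).abs continuous_const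
  have hzW : z ∈ {u : I | |((h.1 u : I) : ℝ) - u| < δ} := by simpa [hfz] using hδ
  rw [← closure_Ioo hxy.ne] at hz
  obtain ⟨a, b, hab, habW⟩ := (hW.inter isOpen_Ioo).exists_Ioo_subset
    (mem_closure_iff.1 hz _ hW hzW)
  obtain ⟨k, hkm, hkc, hk0, hk1, u₁, u₂, u₃, u₄, ⟨h1, h2, h3, h4, h5⟩, s1, s2, s3, s4⟩ :=
    exists_oscillating a.2.1 (Subtype.coe_lt_coe.2 hab)
  have hhm : ∀ {u v : I}, u < v → ((h.1 u : I) : ℝ) < h.1 v := fun huv => h.strictMono huv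
  obtain ⟨h', hh'⟩ := exists_OPH
    (φ := fun u => max ((h.1 u : ℝ) - δ) (min ((h.1 u : ℝ) + δ) (k u)))
    (fun u v huv => max_lt_max (sub_lt_sub_right (hhm huv) _)
      (min_lt_min (add_lt_add_left (hhm huv) _) (hkm huv)))
    ((hcont.sub continuous_const).max ((hcont.add continuous_const).min
      (hkc.comp continuous_subtype_val)))
    (by simp [h.map_zero, hk0, hδ.le]) (by simp [h.map_one, hk1, hδ.le])
  have hI : ∀ u : ℝ, a < u → u < b → u ∈ Set.Icc (0 : ℝ) 1 := fun u hau hub =>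
    ⟨a.2.1.trans hau.le, hub.le.trans b.2.2⟩
  have hmem : ∀ u : I, a < u → u < b → |((h.1 u : I) : ℝ) - u| < δ ∧ x < u ∧ u < y :=
    fun u hau hub => habW ⟨hau, hub⟩
  have hlow : ∀ u : I, a < u → u < b → k u < u → h'.1 u < u := by
    intro u hau hub hku
    have := abs_lt.1 (hmem u hau hub).1
    rw [← Subtype.coe_lt_coe, hh']
    exact max_lt (by linarith) ((min_le_right _ _).trans_lt hku)
  have hupp : ∀ u : I, a < u → u < b → u < k u → u < h'.1 u := by
    intro u hau hub hku
    have := abs_lt.1 (hmem u hau hub).1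
    rw [← Subtype.coe_lt_coe, hh']
    exact lt_max_of_lt_right (lt_min (by linarith) hku)
  refine ⟨h', ?_, Or.inr ⟨⟨u₁, hI u₁ (by linarith) (by linarith)⟩,
    ⟨u₂, hI u₂ (by linarith) (by linarith)⟩, ⟨u₃, hI u₃ (by linarith) (by linarith)⟩,
    ⟨u₄, hI u₄ (by linarith) (by linarith)⟩, ⟨?_, h2, h3, h4, ?_⟩, ?_, ?_, ?_, ?_⟩⟩
  · refine lt_of_le_of_lt ?_ hδε
    change dist (⟨(h'.1 : I → I), h'.1.continuous⟩ : C(I, I)) ⟨(h.1 : I → I), h.1.continuous⟩ ≤ δ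
    rw [ContinuousMap.dist_le hδ.le]
    intro u
    change dist (h'.1 u) (h.1 u) ≤ δ
    rw [Subtype.dist_eq, Real.dist_eq, hh', abs_le]
    constructor
    · linarith [le_max_left ((h.1 u : ℝ) - δ) (min ((h.1 u : ℝ) + δ) (k u))]
    · have : max ((h.1 u : ℝ) - δ) (min ((h.1 u : ℝ) + δ) (k u)) ≤ (h.1 u : ℝ) + δ :=
        max_le (by linarith) (min_le_left _ _)
      linarith
  · exact (hmem ⟨u₁, _⟩ h1 (Subtype.coe_lt_coe.1 (by change u₁ < b; linarith))).2.1
  · exact (hmem ⟨u₄, _⟩ (Subtype.coe_lt_coe.1 (by change a < u₄; linarith)) h5).2.2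
  · exact hlow ⟨u₁, _⟩ h1 (Subtype.coe_lt_coe.1 (by change u₁ < b; linarith)) s1
  · exact hupp ⟨u₂, _⟩ (Subtype.coe_lt_coe.1 (by change a < u₂; linarith))
      (Subtype.coe_lt_coe.1 (by change u₂ < b; linarith)) s2
  · exact hlow ⟨u₃, _⟩ (Subtype.coe_lt_coe.1 (by change a < u₃; linarith))
      (Subtype.coe_lt_coe.1 (by change u₃ < b; linarith)) s3
  · exact hupp ⟨u₄, _⟩ (Subtype.coe_lt_coe.1 (by change a < u₄; linarith)) h5 s4

lemma dense_of_osc {h : OPH} {D : Set I} (hD : Dense D)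
    (hosc : ∀ x ∈ D, ∀ y ∈ D, x < y → h ∈ Osc x y) : Dense {x : I | h.1 x ≠ x} := by
  refine dense_of_exists_between fun {p q} hpq => ?_
  obtain ⟨x, hx, hpx, hxq⟩ := hD.exists_between hpq
  obtain ⟨y, hy, hxy, hyq⟩ := hD.exists_between hxq
  rcases hosc x hx y hy hxy with h1 | ⟨u₁, u₂, u₃, u₄, ⟨h1, h2, h3, h4, h5⟩, s1, -⟩
  · exact ⟨x, h1 x (Set.left_mem_Icc.2 hxy.le), hpx, hxq⟩
  · exact ⟨u₁, s1.ne, hpx.trans h1, ((h2.trans h3).trans (h4.trans h5)).trans hyq⟩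

/-- Of four points with alternating signs the middle two are separated by fixed points from each other
and from the outer two, so they witness richness for the two signs. If `x` or `y` is itself a fixed
point then it is `0` or `1`, which is why `D` must contain these. -/
lemma rich_of_osc {h : OPH} {D : Set I} (hD : Dense D) (h0 : 0 ∈ D) (h1 : 1 ∈ D)
    (hosc : ∀ x ∈ D, ∀ y ∈ D, x < y → h ∈ Osc x y) : Rich h := by
  rintro x y hx hy hxy ⟨z, hxz, hzy, hz⟩ s
  obtain ⟨x', hx'D, hxx', hx'z, hx'⟩ : ∃ x' ∈ D, x ≤ x' ∧ x' ≤ z ∧ (x' = 0 ∨ x' < z) := by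
    rcases eq_or_lt_of_le hxz with rfl | hlt
    · rcases hx hz with rfl | rfl
      · exact ⟨0, h0, le_rfl, le_rfl, Or.inl rfl⟩
      · exact absurd hxy (not_lt.2 unitInterval.le_one')
    · obtain ⟨x', hx'D, h1, h2⟩ := hD.exists_between hlt
      exact ⟨x', hx'D, h1.le, h2.le, Or.inr h2⟩
  obtain ⟨y', hy'D, hyy', hzy', hy'⟩ : ∃ y' ∈ D, y' ≤ y ∧ z ≤ y' ∧ (y' = 1 ∨ z < y') := by
    rcases eq_or_lt_of_le hzy with rfl | hlt
    · rcases hy hz with rfl | rfl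
      · exact absurd hxy (not_lt.2 unitInterval.nonneg')
      · exact ⟨1, h1, le_rfl, le_rfl, Or.inl rfl⟩
    · obtain ⟨y', hy'D, h1, h2⟩ := hD.exists_between hlt
      exact ⟨y', hy'D, h2.le, h1.le, Or.inr h1⟩
  have hxy' : x' < y' := by
    rcases hx' with rfl | hx'
    · rcases hy' with rfl | hy'
      · exact zero_lt_one
      · exact hx'z.trans_lt hy'
    · exact hx'.trans_le hzy'
  rcases hosc x' hx'D y' hy'D hxy' with h2 | ⟨u₁, u₂, u₃, u₄, ⟨l0, l1, l2, l3, l4⟩, s1, s2, s3, s4⟩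
  · exact (h2 z ⟨hx'z, hzy'⟩ hz).elim
  obtain ⟨z₁, a1, b1, f1⟩ := h.exists_fixed l1.le (by simp [s1.le, s2])
  obtain ⟨z₂, a2, b2, f2⟩ := h.exists_fixed l2.le (by simp [s3.le, s2])
  obtain ⟨z₃, a3, b3, f3⟩ := h.exists_fixed l3.le (by simp [s3.le, s4])
  have hne : ∀ {u z : I}, h.1 u ≠ u → h.1 z = z → u ≠ z := by
    rintro u z hu hz rfl
    exact hu hz
  by_cases hs : s
  · exact ⟨z₁, u₂, z₂, hxx'.trans (l0.le.trans a1), lt_of_le_of_ne b1 (hne s2.ne' f1).symm,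
      lt_of_le_of_ne a2 (hne s2.ne' f2), (b2.trans (l3.trans l4).le).trans hyy', f1, f2, s2.ne',
      by simp [hs, s2]⟩
  · exact ⟨z₂, u₃, z₃, hxx'.trans ((l0.trans l1).le.trans a2), lt_of_le_of_ne b2 (hne s3.ne f2).symm,
      lt_of_le_of_ne a3 (hne s3.ne f3), (b3.trans l4.le).trans hyy', f2, f3, s3.ne,
      by simp [hs, s3.le]⟩

/-- `Osc x y` is open and dense for `x < y`; intersect over a countable dense set of pairs. -/
lemma eventually_rich : ∀ᶠ h in residual OPH, Rich h ∧ Dense {x : I | h.1 x ≠ x} := by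
  obtain ⟨t, htc, htd⟩ := TopologicalSpace.exists_countable_dense I
  have hDc : (t ∪ {0, 1}).Countable := htc.union (by simp)
  have hD : Dense (t ∪ {0, 1}) := htd.mono Set.subset_union_left
  have : ∀ᶠ h in residual OPH, ∀ x ∈ t ∪ {0, 1}, ∀ y ∈ t ∪ {0, 1}, x < y → h ∈ Osc x y := by
    rw [eventually_countable_ball hDc]
    intro x _
    rw [eventually_countable_ball hDc]
    intro y _
    by_cases hxy : x < y
    · filter_upwards [residual_of_dense_open (isOpen_osc x y) (dense_osc hxy)] with h hh _
      exact hh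
    · exact Filter.Eventually.of_forall fun h hlt => (hxy hlt).elim
  filter_upwards [this] with h hh
  exact ⟨rich_of_osc hD (by simp) (by simp) hh, dense_of_osc hD hh⟩

/-- If `f ∈ Homeo₊[0,1]` satisfies conditions (1)–(3), then the conjugacy class of `f` is
comeager in `Homeo₊[0,1]`. -/
theorem conjugacy_class_comeager_of_genericCond (f : OPH) (hf : GenericCond f) :
    {h : OPH | ∃ g : OPH, h.1 = g.1.trans (f.1.trans g.1.symm)} ∈ residual OPH := by
  filter_upwards [eventually_rich] with h hh
  exact hf.rich.conj hf.dense hh.1 hh.2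

end
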